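/- arXiv:math/9805085 — 4 statements merged into one kernel-verified Lean document; each statement's English description precedes it below -/
import Mathlib

section
/- Let (E, ι, q, R) be an orderextension for (G₁, G₀) relative to D. The following are equivalent: (1) there is a group isomorphism φ : E ≅ G₀ × G₁ with φ ∘ ι equal to the inclusion a ↦ (a, 0), with (second projection) ∘ φ = q, and with R = (D ∘ first projection) ∘ φ; (2) there exists a homomorphism s : G₁ → E with q ∘ s = id, im R = im D, and there exists a homomorphism s' : G₁ → E with q ∘ s' = id and im s' ⊆ ker R; (3) there exists a homomorphism s : G₁ → E with q ∘ s = id and R ∘ s = 0. -/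
/-- Proposition 2.5: characterization of the trivial orderextension. -/
theorem orderextension_trivial_tfae
    {G₀ G₁ V E : Type*} [AddCommGroup G₀] [AddCommGroup G₁] [AddCommGroup V] [AddCommGroup E]
    (ι : G₀ →+ E) (hι : Function.Injective ι)
    (q : E →+ G₁) (hq : Function.Surjective q)
    (hexact : q.ker = ι.range)
    (D : G₀ →+ V) (R : E →+ V) (hRι : R.comp ι = D) :
    ((∃ φ : E ≃+ G₀ × G₁, (∀ a : G₀, φ (ι a) = (a, 0)) ∧ (∀ x : E, (φ x).2 = q x) ∧
        (∀ x : E, D ((φ x).1) = R x) ) ↔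
      ((∃ s : G₁ →+ E, q.comp s = AddMonoidHom.id G₁) ∧
        R.range = D.range ∧
        (∃ s' : G₁ →+ E, q.comp s' = AddMonoidHom.id G₁ ∧ ∀ b : G₁, R (s' b) = 0))) ∧
    (((∃ s : G₁ →+ E, q.comp s = AddMonoidHom.id G₁) ∧
        R.range = D.range ∧
        (∃ s' : G₁ →+ E, q.comp s' = AddMonoidHom.id G₁ ∧ ∀ b : G₁, R (s' b) = 0)) ↔
      (∃ s : G₁ →+ E, q.comp s = AddMonoidHom.id G₁ ∧ ∀ b : G₁, R (s b) = 0)) := by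
  have hR : ∀ a, R (ι a) = D a := fun a => DFunLike.congr_fun hRι a
  have hqι : ∀ a, q (ι a) = 0 := fun a => by
    have h : ι a ∈ q.ker := by rw [hexact]; exact ⟨a, rfl⟩
    exact h
  have h12 : (∃ φ : E ≃+ G₀ × G₁, (∀ a : G₀, φ (ι a) = (a, 0)) ∧ (∀ x : E, (φ x).2 = q x) ∧
        (∀ x : E, D ((φ x).1) = R x)) →
      (∃ s : G₁ →+ E, q.comp s = AddMonoidHom.id G₁ ∧ ∀ b : G₁, R (s b) = 0) := by
    rintro ⟨φ, h1, h2, h3⟩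
    refine ⟨φ.symm.toAddMonoidHom.comp (AddMonoidHom.inr G₀ G₁), ?_, ?_⟩
    · ext b
      simp [← h2]
    · intro b
      simp [← h3]
  have hdec : ∀ s : G₁ →+ E, q.comp s = AddMonoidHom.id G₁ → ∀ x, ∃ a, ι a + s (q x) = x := by
    intro s hs x
    have hqs : ∀ b, q (s b) = b := fun b => DFunLike.congr_fun hs b
    have h : x - s (q x) ∈ q.ker := by
      rw [AddMonoidHom.mem_ker, map_sub, hqs, sub_self]
    rw [hexact] at h
    obtain ⟨a, ha⟩ := h
    exact ⟨a, by rw [ha, sub_add_cancel]⟩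
  have h32 : (∃ s : G₁ →+ E, q.comp s = AddMonoidHom.id G₁ ∧ ∀ b : G₁, R (s b) = 0) →
      R.range = D.range := by
    rintro ⟨s, hs, hRs⟩
    ext v
    constructor
    · rintro ⟨x, rfl⟩
      obtain ⟨a, ha⟩ := hdec s hs x
      exact ⟨a, by rw [← ha, map_add, hRs, add_zero, hR]⟩
    · rintro ⟨a, rfl⟩
      exact ⟨ι a, hR a⟩
  have h31 : (∃ s : G₁ →+ E, q.comp s = AddMonoidHom.id G₁ ∧ ∀ b : G₁, R (s b) = 0) →
      (∃ φ : E ≃+ G₀ × G₁, (∀ a : G₀, φ (ι a) = (a, 0)) ∧ (∀ x : E, (φ x).2 = q x) ∧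
        (∀ x : E, D ((φ x).1) = R x)) := by
    rintro ⟨s, hs, hRs⟩
    have hqs : ∀ b, q (s b) = b := fun b => DFunLike.congr_fun hs b
    have hbij : Function.Bijective (ι.coprod s) := by
      constructor
      · rw [injective_iff_map_eq_zero]
        rintro ⟨a, b⟩ h
        rw [AddMonoidHom.coprod_apply] at h
        have hb : b = 0 := by
          have := congrArg q h
          simpa [hqι, hqs] using this
        subst hb
        have ha : a = 0 := hι (by simpa using h)
        rw [ha]; rfl
      · intro x
        obtain ⟨a, ha⟩ := hdec s hs x
        exact ⟨(a, q x), ha⟩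
    let ψ := AddEquiv.ofBijective (ι.coprod s) hbij
    have hψ : ∀ p, ψ p = ι p.1 + s p.2 := fun p => rfl
    refine ⟨ψ.symm, ?_, ?_, ?_⟩
    · intro a
      rw [AddEquiv.symm_apply_eq, hψ]
      simp
    · intro x
      obtain ⟨p, rfl⟩ := ψ.surjective x
      rw [AddEquiv.symm_apply_apply, hψ, map_add, hqι, hqs, zero_add]
    · intro x
      obtain ⟨p, rfl⟩ := ψ.surjective x
      rw [AddEquiv.symm_apply_apply, hψ, map_add, hR, hRs, add_zero]
  have h23 : ((∃ s : G₁ →+ E, q.comp s = AddMonoidHom.id G₁) ∧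
        R.range = D.range ∧
        (∃ s' : G₁ →+ E, q.comp s' = AddMonoidHom.id G₁ ∧ ∀ b : G₁, R (s' b) = 0)) ↔
      (∃ s : G₁ →+ E, q.comp s = AddMonoidHom.id G₁ ∧ ∀ b : G₁, R (s b) = 0) :=
    ⟨fun h => h.2.2, fun h => ⟨h.imp fun _ hs => hs.1, h32 h, h⟩⟩
  exact ⟨⟨fun h => h23.2 (h12 h), fun h => h31 (h23.1 h)⟩, h23⟩
end

section
/- Let A be a unital C*-algebra and τ : A → ℂ a continuous linear functional with τ(ab) = τ(ba) for all a, b ∈ A. Let w : ℝ → A be continuously differentiable on [0,1] with derivative w', such that w(t) is unitary and ‖w(t) − 1‖ < 2 for all t ∈ [0,1], and w(0) = w(1). Then ∫₀¹ τ(w'(t) · (w(t))*) dt = 0; that is, the winding integral relative to τ of a closed loop of unitaries staying in the open ball of radius 2 around 1 vanishes. -/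
open Set MeasureTheory intervalIntegral in
theorem aux_isUnit {A : Type*} [CStarAlgebra A] (u : A) (hu : u ∈ unitary A) (hn : ‖u - 1‖ < 2)
    (s : ℝ) (hs : s ∈ Set.Icc (0 : ℝ) 1) : IsUnit (1 + s • (u - 1)) := by
  nontriviality A
  obtain ⟨h0, h1⟩ := hs
  rcases le_or_gt s (1/2) with h | h
  · have : ‖-(s • (u - 1))‖ < 1 := by
      rw [norm_neg, norm_smul, Real.norm_of_nonneg h0]
      nlinarith [norm_nonneg (u - 1)]
    simpa using isUnit_one_sub_of_norm_lt_one this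
  · have hs0 : 0 < s := by linarith
    have hc : ‖-(((1 - s) / s) • star u)‖ < 1 := by
      rw [norm_neg, norm_smul, norm_star, CStarRing.norm_of_mem_unitary hu,
        Real.norm_of_nonneg (div_nonneg (by linarith) h0), mul_one, div_lt_one hs0]
      linarith
    have e : 1 + s • (u - 1) = (s • u) * (1 - -(((1 - s) / s) • star u)) := by
      rw [sub_neg_eq_add, mul_add, mul_one, smul_mul_smul_comm, (Unitary.mem_iff.1 hu).2,
        mul_div_cancel₀ _ hs0.ne', smul_sub, sub_smul, one_smul]
      abel
    rw [e]
    refine IsUnit.mul ?_ (isUnit_one_sub_of_norm_lt_one hc)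
    have hu' : IsUnit u := ⟨⟨u, star u, (Unitary.mem_iff.1 hu).2, (Unitary.mem_iff.1 hu).1⟩, rfl⟩
    exact hu'.smul (Units.mk0 s hs0.ne')

theorem aux_inv_deriv {A : Type*} [CStarAlgebra A] (f : ℝ → A) (f' : A) (x : ℝ)
    (hf : HasDerivAt f f' x) (hu : IsUnit (f x)) :
    HasDerivAt (fun y => Ring.inverse (f y))
      (-(Ring.inverse (f x) * f' * Ring.inverse (f x))) x := by
  have H₁ := hasFDerivAt_ringInverse (𝕜 := ℝ) hu.unit
  have H₂ := HasFDerivAt.comp_hasDerivAt x (l := Ring.inverse) H₁ hf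
  rw [← Ring.inverse_unit hu.unit] at H₂
  simpa using! H₂

theorem aux_alg {A : Type*} [CStarAlgebra A] (v : A) (s : ℝ) (hu : IsUnit (1 + s • v)) :
    Ring.inverse (1 + s • v) * (s • v) * Ring.inverse (1 + s • v) =
      Ring.inverse (1 + s • v) - Ring.inverse (1 + s • v) * Ring.inverse (1 + s • v) := by
  have h := Ring.inverse_mul_cancel _ hu
  set r := Ring.inverse (1 + s • v)
  have : r * (s • v) = 1 - r := by
    rw [← h, mul_add, mul_one]; abel
  rw [this, sub_mul, one_mul]

open Set MeasureTheory intervalIntegral in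
/-- Used in Lemmas 2.1 and 3.6: the winding integral relative to a tracial continuous
linear functional of a closed continuously differentiable loop of unitaries staying in the
open ball of radius 2 around 1 vanishes. -/
theorem winding_integral_small_loop_vanishes
    {A : Type*} [CStarAlgebra A]
    (τ : A →L[ℂ] ℂ) (hτ : ∀ a b : A, τ (a * b) = τ (b * a))
    (w w' : ℝ → A)
    (hderiv : ∀ t ∈ Set.Icc (0 : ℝ) 1, HasDerivAt w (w' t) t)
    (hcont : ContinuousOn w' (Set.Icc (0 : ℝ) 1))
    (hunit : ∀ t ∈ Set.Icc (0 : ℝ) 1, w t ∈ unitary A)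
    (hnorm : ∀ t ∈ Set.Icc (0 : ℝ) 1, ‖w t - 1‖ < 2)
    (hclosed : w 0 = w 1) :
    ∫ t in (0 : ℝ)..1, τ (w' t * star (w t)) = 0 := by
  have hU : ∀ t ∈ Icc (0 : ℝ) 1, ∀ s ∈ Icc (0 : ℝ) 1, IsUnit (1 + s • (w t - 1)) :=
    fun t ht s hs => aux_isUnit _ (hunit t ht) (hnorm t ht) s hs
  let R : ℝ → ℝ → A := fun t s => Ring.inverse (1 + s • (w t - 1))
  let τr : A →L[ℝ] ℂ := τ.restrictScalars ℝ
  let f : ℝ → ℝ → ℂ := fun t s => τr (w' t * (R t s * R t s))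
  have hwc : ContinuousOn w (Icc 0 1) := fun t ht => (hderiv t ht).continuousAt.continuousWithinAt
  have hm1 : MapsTo Prod.fst (Icc (0:ℝ) 1 ×ˢ Icc (0:ℝ) 1) (Icc (0:ℝ) 1) := fun p hp => hp.1
  have hRc : ContinuousOn (Function.uncurry R) (Icc 0 1 ×ˢ Icc 0 1) := by
    intro p hp
    have h1 : ContinuousWithinAt (fun p : ℝ × ℝ => 1 + p.2 • (w p.1 - 1)) (Icc 0 1 ×ˢ Icc 0 1) p := by
      have : ContinuousOn (fun p : ℝ × ℝ => w p.1) (Icc 0 1 ×ˢ Icc 0 1) :=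
        hwc.comp continuousOn_fst hm1
      have h2 : ContinuousOn (fun p : ℝ × ℝ => 1 + p.2 • (w p.1 - 1)) (Icc 0 1 ×ˢ Icc 0 1) := by
        fun_prop
      exact h2 p hp
    have hu := hU p.1 hp.1 p.2 hp.2
    exact ContinuousAt.comp_continuousWithinAt (g := Ring.inverse)
      (NormedRing.inverse_continuousAt hu.unit) h1
  have hfc : ContinuousOn (Function.uncurry f) (Icc 0 1 ×ˢ Icc 0 1) := by
    have h1 : ContinuousOn (fun p : ℝ × ℝ => w' p.1) (Icc 0 1 ×ˢ Icc 0 1) :=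
      hcont.comp continuousOn_fst hm1
    exact τr.continuous.comp_continuousOn (h1.mul (hRc.mul hRc))
  have hfs : ∀ t ∈ Icc (0:ℝ) 1, ContinuousOn (fun s => f t s) (Icc 0 1) := fun t ht =>
    hfc.comp (f := fun s => (t, s)) (by fun_prop) (fun s hs => ⟨ht, hs⟩)
  have hft : ∀ s ∈ Icc (0:ℝ) 1, ContinuousOn (fun t => f t s) (Icc 0 1) := fun s hs =>
    hfc.comp (f := fun t => (t, s)) (by fun_prop) (fun t ht => ⟨ht, hs⟩)
  have huI : uIcc (0:ℝ) 1 = Icc 0 1 := uIcc_of_le zero_le_one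
  -- inner integral in s
  have hS : ∀ t ∈ Icc (0:ℝ) 1, ∫ s in (0:ℝ)..1, f t s = τ (w' t * star (w t)) := by
    intro t ht
    have hd : ∀ s ∈ uIcc (0:ℝ) 1, HasDerivAt (fun s => τr (w' t * (s • R t s))) (f t s) s := by
      intro s hs
      rw [huI] at hs
      have h1 : HasDerivAt (fun s : ℝ => 1 + s • (w t - 1)) (w t - 1) s := by
        simpa using ((hasDerivAt_id s).smul_const (w t - 1)).const_add 1
      have h2 := aux_inv_deriv _ _ _ h1 (hU t ht s hs)
      have h3 := (hasDerivAt_id s).smul h2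
      have h4 := τr.hasFDerivAt.comp_hasDerivAt s (h3.const_mul (w' t))
      convert! h4 using 1
      simp only [f, R, id, one_smul]
      have := aux_alg (w t - 1) s (hU t ht s hs)
      rw [mul_smul_comm, smul_mul_assoc] at this
      rw [smul_neg, this]
      congr 2
      abel
    rw [integral_eq_sub_of_hasDerivAt hd
      (ContinuousOn.intervalIntegrable (by rw [huI]; exact hfs t ht))]
    have : Ring.inverse (w t) = star (w t) := by
      have hu := Unitary.mem_iff.1 (hunit t ht)
      exact Ring.inverse_unit ⟨w t, star (w t), hu.2, hu.1⟩
    simp [R, this, τr]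
  have hT : ∀ s ∈ Icc (0:ℝ) 1, ∫ t in (0:ℝ)..1, f t s = 0 := by
    intro s hs
    have hd : ∀ t ∈ uIcc (0:ℝ) 1, HasDerivAt (fun t => τr ((w t - 1) * R t s)) (f t s) t := by
      intro t ht
      rw [huI] at ht
      have h0 := (hderiv t ht).sub_const 1
      have h1 : HasDerivAt (fun t : ℝ => 1 + s • (w t - 1)) (s • w' t) t :=
        (h0.const_smul s).const_add 1
      have h2 := aux_inv_deriv _ _ _ h1 (hU t ht s hs)
      have h4 := τr.hasFDerivAt.comp_hasDerivAt t (h0.mul h2)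
      convert! h4 using 1
      have := aux_alg (w t - 1) s (hU t ht s hs)
      simp only [f, R]
      set r := Ring.inverse (1 + s • (w t - 1))
      have e : τ ((w t - 1) * (r * (s • w' t) * r)) = τ (w' t * (r - r * r)) := by
        rw [← this]
        calc _ = τ (((w t - 1) * r) * (s • w' t * r)) := by simp only [mul_assoc]
          _ = τ ((s • w' t * r) * ((w t - 1) * r)) := hτ _ _
          _ = _ := by simp only [mul_assoc, smul_mul_assoc, mul_smul_comm]
      change τ _ = τ _
      rw [mul_neg, map_add, map_neg, e, ← map_neg, ← map_add]
      congr 1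
      noncomm_ring
    rw [integral_eq_sub_of_hasDerivAt hd
      (ContinuousOn.intervalIntegrable (by rw [huI]; exact hft s hs))]
    simp [R, hclosed]
  have hint : Integrable (Function.uncurry f)
      ((volume.restrict (Ioc (0:ℝ) 1)).prod (volume.restrict (Ioc (0:ℝ) 1))) := by
    rw [Measure.prod_restrict]
    exact (hfc.integrableOn_compact (isCompact_Icc.prod isCompact_Icc)).mono_set
      (prod_mono Ioc_subset_Icc_self Ioc_subset_Icc_self)
  calc ∫ t in (0 : ℝ)..1, τ (w' t * star (w t)) = ∫ t in (0:ℝ)..1, ∫ s in (0:ℝ)..1, f t s :=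
        integral_congr (fun t ht => (hS t (huI ▸ ht)).symm)
    _ = ∫ s in (0:ℝ)..1, ∫ t in (0:ℝ)..1, f t s := by
        simp only [integral_of_le (zero_le_one (α := ℝ))]
        exact integral_integral_swap hint
    _ = ∫ s in (0:ℝ)..1, 0 := integral_congr (fun s hs => hT s (huI ▸ hs))
    _ = 0 := by simp
end

section
/- Let G₀, G₁, V be abelian groups and D : G₀ → V a homomorphism. For a homomorphism φ : G₁ → V, define R_φ : G₀ × G₁ → V by R_φ(a, b) := D(a) + φ(b). Then for homomorphisms φ, ψ : G₁ → V, the following are equivalent: (1) there exists a group isomorphism μ : G₀ × G₁ ≅ G₀ × G₁ with μ(a, 0) = (a, 0) for all a ∈ G₀, (second projection) ∘ μ = second projection, and R_ψ ∘ μ = R_φ; (2) there exists a homomorphism h : G₁ → G₀ with φ(b) = ψ(b) + D(h(b)) for all b ∈ G₁. -/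
/-- From the proof of Proposition 4.3: the trivial-extension orderextensions `(G₀ × G₁, R_φ)`
and `(G₀ × G₁, R_ψ)`, where `R_φ (a, b) = D a + φ b`, are isomorphic if and only if
`φ = ψ + D ∘ h` for some homomorphism `h : G₁ → G₀`. -/
theorem trivial_orderextension_iso_iff
    {G₀ G₁ V : Type*} [AddCommGroup G₀] [AddCommGroup G₁] [AddCommGroup V]
    (D : G₀ →+ V) (φ ψ : G₁ →+ V) :
    (∃ μ : G₀ × G₁ ≃+ G₀ × G₁,
        (∀ a : G₀, μ (a, 0) = (a, 0)) ∧
        (∀ x : G₀ × G₁, (μ x).2 = x.2) ∧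
        (∀ x : G₀ × G₁, D ((μ x).1) + ψ ((μ x).2) = D x.1 + φ x.2)) ↔
      (∃ h : G₁ →+ G₀, ∀ b : G₁, φ b = ψ b + D (h b)) := by
  constructor
  · rintro ⟨μ, -, h2, h3⟩
    refine ⟨(AddMonoidHom.fst G₀ G₁).comp (μ.toAddMonoidHom.comp (AddMonoidHom.inr G₀ G₁)), ?_⟩
    intro b
    have e := h3 (0, b)
    rw [h2] at e
    simp only [map_zero, zero_add] at e
    rw [← e, add_comm]
    rfl
  · rintro ⟨h, hh⟩
    refine ⟨{ toFun := fun x => (x.1 + h x.2, x.2)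
              invFun := fun x => (x.1 - h x.2, x.2)
              left_inv := fun x => by simp
              right_inv := fun x => by simp
              map_add' := fun x y => by
                ext
                · simp only [Prod.fst_add, Prod.snd_add, map_add]
                  abel
                · simp }, ?_, ?_, ?_⟩
    · intro a
      simp
    · intro x
      rfl
    · intro x
      change D (x.1 + h x.2) + ψ x.2 = D x.1 + φ x.2
      rw [hh, map_add]
      abel
end

section
/- Let C be an abelian group and, for each n ∈ ℕ, let K_n be an abelian group with homomorphisms χ_n : K_n → K_{n+1} and ψ_n : K_n → C. Set E_n := C × K_n with connecting homomorphisms μ_n : E_n → E_{n+1}, μ_n(a, b) := (a + ψ_n(b), χ_n(b)). Let E and K denote the direct limits of the systems (E_n, μ_n) and (K_n, χ_n), let q : E → K be the homomorphism induced by the second projections, and note that a ↦ (class of (a, 0) in E) defines an injective homomorphism C → E whose image is ker q. If there exists a homomorphism φ : K → E with q ∘ φ = id (i.e., the limit extension 0 → C → E → K → 0 splits), then there exist homomorphisms h_n : K_n → C with ψ_n = h_n − h_{n+1} ∘ χ_n for all n. -/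
section

/-- The transition map `K i →+ K j` obtained by iterating maps `χ n : K n →+ K (n+1)`. -/
def connect {K : ℕ → Type*} [∀ n, AddCommGroup (K n)] (χ : ∀ n, K n →+ K (n + 1))
    (i j : ℕ) (h : i ≤ j) : K i →+ K j :=
  Nat.leRecOn (C := fun m => K i →+ K m) h (fun {k} g => (χ k).comp g) (AddMonoidHom.id (K i))

/-- The connecting homomorphism `μ_n : C × K n →+ C × K (n+1)`,
`μ_n (a, b) = (a + ψ n b, χ n b)`. -/
def twistMap {C : Type*} [AddCommGroup C] {K : ℕ → Type*} [∀ n, AddCommGroup (K n)]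
    (χ : ∀ n, K n →+ K (n + 1)) (ψ : ∀ n, K n →+ C) (n : ℕ) : C × K n →+ C × K (n + 1) where
  toFun x := (x.1 + ψ n x.2, χ n x.2)
  map_zero' := by simp
  map_add' x y := by
    simp only [Prod.fst_add, Prod.snd_add, map_add, Prod.mk_add_mk, Prod.mk.injEq]
    refine ⟨by abel, by simp⟩

theorem connect_self_aux {K : ℕ → Type*} [∀ n, AddCommGroup (K n)]
    (χ : ∀ n, K n →+ K (n + 1)) (i : ℕ) (h : i ≤ i) (x : K i) : connect χ i i h x = x := by
  unfold connect
  rw [Nat.leRecOn_self]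
  rfl

theorem connect_succ_aux {K : ℕ → Type*} [∀ n, AddCommGroup (K n)]
    (χ : ∀ n, K n →+ K (n + 1)) (i j : ℕ) (h : i ≤ j) (h' : i ≤ j + 1) (x : K i) :
    connect χ i (j + 1) h' x = χ j (connect χ i j h x) := by
  unfold connect
  rw [Nat.leRecOn_succ h]
  rfl

theorem connect_directed_aux {K : ℕ → Type*} [∀ n, AddCommGroup (K n)]
    (χ : ∀ n, K n →+ K (n + 1)) : DirectedSystem K (fun i j h => connect χ i j h) where
  map_self := fun i x => connect_self_aux χ i le_rfl x
  map_map := by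
    intro k j i hij hjk x
    induction k, hjk using Nat.le_induction with
    | base => rw [connect_self_aux]
    | succ k hk ih =>
      rw [connect_succ_aux χ j k hk, connect_succ_aux χ i k (hij.trans hk), ih]

theorem connect_twist_aux {C : Type*} [AddCommGroup C] {K : ℕ → Type*} [∀ n, AddCommGroup (K n)]
    (χ : ∀ n, K n →+ K (n + 1)) (ψ : ∀ n, K n →+ C) (i j : ℕ) (h : i ≤ j) (a : C) :
    connect (twistMap χ ψ) i j h (a, 0) = (a, 0) := by
  induction j, h using Nat.le_induction with
  | base => rw [connect_self_aux]
  | succ k hk ih =>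
    rw [connect_succ_aux (twistMap χ ψ) i k hk, ih]
    simp [twistMap]

theorem connect_twist_snd_aux {C : Type*} [AddCommGroup C] {K : ℕ → Type*}
    [∀ n, AddCommGroup (K n)]
    (χ : ∀ n, K n →+ K (n + 1)) (ψ : ∀ n, K n →+ C) (i j : ℕ) (h : i ≤ j) (x : C × K i) :
    (connect (twistMap χ ψ) i j h x).2 = connect χ i j h x.2 := by
  induction j, h using Nat.le_induction with
  | base => rw [connect_self_aux, connect_self_aux]
  | succ k hk ih =>
    rw [connect_succ_aux (twistMap χ ψ) i k hk, connect_succ_aux χ i k hk, ← ih]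
    rfl

/-- Proof of Lemma 3.7: if the direct limit extension `0 → C → E → K → 0` of the system
`E n = C × K n`, `μ n (a, b) = (a + ψ n b, χ n b)` splits, then there are homomorphisms
`h n : K n →+ C` with `ψ n = h n − h (n+1) ∘ χ n`.  (Here `a ↦ class of (a, 0)` is an
injective homomorphism `C → E` whose image is the kernel of the projection `q : E → K`.) -/
theorem split_limit_extension_gives_cobounding
    {C : Type*} [AddCommGroup C] {K : ℕ → Type*} [∀ n, AddCommGroup (K n)]
    (χ : ∀ n, K n →+ K (n + 1)) (ψ : ∀ n, K n →+ C)
    (q : AddCommGroup.DirectLimit (fun n => C × K n) (connect (twistMap χ ψ)) →+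
          AddCommGroup.DirectLimit K (connect χ))
    (hq : ∀ (n : ℕ) (x : C × K n),
      q (AddCommGroup.DirectLimit.of (fun m => C × K m) (connect (twistMap χ ψ)) n x) =
        AddCommGroup.DirectLimit.of K (connect χ) n x.2) :
    (Function.Injective (fun a : C =>
        AddCommGroup.DirectLimit.of (fun m => C × K m) (connect (twistMap χ ψ)) 0 (a, 0)) ∧
      ∀ y, q y = 0 ↔ ∃ a : C,
        AddCommGroup.DirectLimit.of (fun m => C × K m) (connect (twistMap χ ψ)) 0 (a, 0) = y) ∧
    ((∃ φ : AddCommGroup.DirectLimit K (connect χ) →+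
          AddCommGroup.DirectLimit (fun n => C × K n) (connect (twistMap χ ψ)),
        q.comp φ = AddMonoidHom.id (AddCommGroup.DirectLimit K (connect χ))) →
      ∃ h : ∀ n, K n →+ C, ∀ (n : ℕ) (b : K n), ψ n b = h n b - h (n + 1) (χ n b)) := by
  have := connect_directed_aux χ
  have := connect_directed_aux (twistMap χ ψ)
  set ofE := AddCommGroup.DirectLimit.of (fun m => C × K m) (connect (twistMap χ ψ)) with hofE
  have hof0 : ∀ (n : ℕ) (a : C), ofE n (a, 0) = ofE 0 (a, 0) := by
    intro n a
    have := AddCommGroup.DirectLimit.of_f (G := fun m => C × K m) (f := connect (twistMap χ ψ))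
      (Nat.zero_le n) (a, 0)
    rw [connect_twist_aux] at this
    exact this
  have hinj0 : ∀ a : C, ofE 0 (a, 0) = 0 → a = 0 := by
    intro a ha
    obtain ⟨j, hj, e⟩ := AddCommGroup.DirectLimit.of.zero_exact _ _ ha
    rw [connect_twist_aux] at e
    exact congrArg Prod.fst e
  let inc : C →+ AddCommGroup.DirectLimit (fun n => C × K n) (connect (twistMap χ ψ)) :=
    (ofE 0).comp (AddMonoidHom.inl C (K 0))
  have hinc : ∀ a, inc a = ofE 0 (a, 0) := fun a => rfl
  have hinj : Function.Injective inc := (injective_iff_map_eq_zero inc).2 hinj0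
  have hker : ∀ y, q y = 0 ↔ ∃ a : C, ofE 0 (a, 0) = y := by
    intro y
    constructor
    · induction y using AddCommGroup.DirectLimit.induction_on with
      | ih n x =>
        intro h
        rw [hq] at h
        obtain ⟨j, hj, e⟩ := AddCommGroup.DirectLimit.of.zero_exact _ _ h
        rw [← connect_twist_snd_aux χ ψ] at e
        refine ⟨(connect (twistMap χ ψ) n j hj x).1, ?_⟩
        rw [← hof0 j, ← AddCommGroup.DirectLimit.of_f (G := fun m => C × K m)
          (f := connect (twistMap χ ψ)) hj x, hofE]
        congr 1
        exact Prod.ext rfl e.symm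
    · rintro ⟨a, rfl⟩
      rw [hq]
      simp
  refine ⟨⟨hinj, hker⟩, ?_⟩
  rintro ⟨φ, hφ⟩
  let ofK := AddCommGroup.DirectLimit.of K (connect χ)
  let d : ∀ n, K n →+ AddCommGroup.DirectLimit (fun n => C × K n) (connect (twistMap χ ψ)) :=
    fun n => (ofE n).comp (AddMonoidHom.inr C (K n)) - φ.comp (ofK n)
  have hd : ∀ n b, d n b = ofE n (0, b) - φ (ofK n b) := fun n b => rfl
  have hex : ∀ n b, ∃ a : C, inc a = d n b := by
    intro n b
    refine (hker _).1 ?_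
    rw [hd, map_sub, hq]
    have := DFunLike.congr_fun hφ (ofK n b)
    simp only [AddMonoidHom.comp_apply, AddMonoidHom.id_apply] at this
    rw [this]
    exact sub_self _
  choose g hg using hex
  refine ⟨fun n => AddMonoidHom.mk' (g n) ?_, ?_⟩
  · intro a b
    apply hinj
    rw [map_add, hg, hg, hg, map_add]
  · intro n b
    apply hinj
    have hs : ∀ x : C × K n, ofE (n + 1) (twistMap χ ψ n x) = ofE n x := by
      intro x
      have := AddCommGroup.DirectLimit.of_f (G := fun m => C × K m) (f := connect (twistMap χ ψ))
        (Nat.le_succ n) x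
      rw [connect_succ_aux (twistMap χ ψ) n n le_rfl, connect_self_aux] at this
      exact this
    have hk : ofK (n + 1) (χ n b) = ofK n b := by
      have := AddCommGroup.DirectLimit.of_f (G := K) (f := connect χ) (Nat.le_succ n) b
      rw [connect_succ_aux χ n n le_rfl, connect_self_aux] at this
      exact this
    have ht : twistMap χ ψ n (0, b) = (ψ n b, 0) + (0, χ n b) := by simp [twistMap]
    simp only [AddMonoidHom.mk'_apply]
    rw [map_sub, hg, hg, hd, hd, hk, ← hs, ht, map_add, hof0, hinc]
    abel

end
end
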